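/- Let (C_r)_{r∈ℤ} be a real even sequence with C̄_r = (1/r) Σ_{s=1}^{r} C_s satisfying |C̄_r| ≤ K/r^α for all r ≥ 1, for some K > 0 and α > 1. Then lim_{N→∞} (1/N) Σ_{r=−N}^{N} [(N−|r|)(N+1−|r|)(N+2−|r|) / (6(N+1)²)] C_r = C_0 / 6; i.e. the mean drift variance grows linearly with slope C_0/6 (strong chaos). -/

import Mathlib

/-!
Write `S r = ∑_{s=1}^r C s` and `p r = (N - r)(N + 1 - r)(N + 2 - r)`, so that the weights are
`p |r| / (6(N + 1)²)`. The hypothesis gives `|S r| ≤ K r ^ (1 - α)`, hence `S r → 0`.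
By evenness the sum is the `r = 0` term plus twice the sum over `1 ≤ r ≤ N`. Divided by `N`, the
first is `(N + 2) / (6(N + 1)) * C 0 → C 0 / 6`. For the second, summation by parts (`abel_sum`)
with `p N = 0` and `0 ≤ p r - p (r + 1) = 3(N - r)(N + 1 - r) ≤ 3(N + 1)²` gives the bound
`∑_{r<N} |S r|` (`weighted_sum_bound`), which is `o(N)` because the Cesàro means of a null sequence
tend to zero.
-/

open Filter

/-- Summation by parts, with partial sums starting at `1`. -/
lemma abel_sum (c p : ℕ → ℝ) (M : ℕ) :
    ∑ r ∈ Finset.Icc 1 M, p r * c r = p M * ∑ s ∈ Finset.Icc 1 M, c s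
      + ∑ r ∈ Finset.range M, (p r - p (r + 1)) * ∑ s ∈ Finset.Icc 1 r, c s := by
  induction M with
  | zero => simp
  | succ n ih =>
    rw [Finset.sum_Icc_succ_top (by omega), ih, Finset.sum_Icc_succ_top (by omega),
      Finset.sum_range_succ]
    ring

lemma sum_Icc_neg_of_even (f : ℤ → ℝ) (hf : ∀ r, f (-r) = f r) (N : ℕ) :
    ∑ r ∈ Finset.Icc (-(N : ℤ)) N, f r = f 0 + 2 * ∑ s ∈ Finset.Icc 1 N, f (s : ℤ) := by
  induction N with
  | zero => simp
  | succ n ih =>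
    have h : Finset.Icc (-((n + 1 : ℕ) : ℤ)) ((n + 1 : ℕ) : ℤ)
        = insert (-((n + 1 : ℕ) : ℤ)) (insert ((n + 1 : ℕ) : ℤ) (Finset.Icc (-(n : ℤ)) n)) := by
      ext x
      simp only [Finset.mem_Icc, Finset.mem_insert]
      omega
    have h1 : ((n + 1 : ℕ) : ℤ) ∉ Finset.Icc (-(n : ℤ)) n := by
      simp only [Finset.mem_Icc]; omega
    have h2 : -((n + 1 : ℕ) : ℤ) ∉ insert ((n + 1 : ℕ) : ℤ) (Finset.Icc (-(n : ℤ)) n) := by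
      simp only [Finset.mem_Icc, Finset.mem_insert]; omega
    rw [h, Finset.sum_insert h2, Finset.sum_insert h1, ih, hf,
      Finset.sum_Icc_succ_top (by omega)]
    ring

lemma tendsto_partial_sum_zero (S : ℕ → ℝ) (K α : ℝ) (hα : 1 < α)
    (hbound : ∀ r : ℕ, 1 ≤ r → |(1 / (r : ℝ)) * S r| ≤ K / (r : ℝ) ^ α) :
    Tendsto (fun r => |S r|) atTop (nhds 0) := by
  have hlim : Tendsto (fun r : ℕ => K * (r : ℝ) ^ (-(α - 1))) atTop (nhds 0) := by
    simpa using ((tendsto_rpow_neg_atTop (sub_pos.2 hα)).comp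
      tendsto_natCast_atTop_atTop).const_mul K
  refine squeeze_zero' (Eventually.of_forall fun r => abs_nonneg _) ?_ hlim
  filter_upwards [eventually_ge_atTop 1] with r hr
  have hr0 : (0 : ℝ) < r := by exact_mod_cast hr
  have h := hbound r hr
  rw [abs_mul, abs_of_pos (by positivity : (0 : ℝ) < 1 / r)] at h
  have e : (r : ℝ) ^ (-(α - 1)) = r / (r : ℝ) ^ α := by
    rw [neg_sub, Real.rpow_sub hr0, Real.rpow_one]
  rw [e]
  calc |S r| = r * (1 / r * |S r|) := by field_simp
    _ ≤ r * (K / (r : ℝ) ^ α) := by gcongr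
    _ = K * (r / (r : ℝ) ^ α) := by ring

/-- Holds by summation by parts: the weights `p r = (N - r)(N + 1 - r)(N + 2 - r)` vanish at `r = N`,
and `p r - p (r + 1)` lies in `[0, 3(N + 1)²]` for `0 ≤ r < N`. -/
lemma weighted_sum_bound (c : ℕ → ℝ) (N : ℕ) :
    |∑ r ∈ Finset.Icc 1 N, (((N : ℝ) - r) * (N + 1 - r) * (N + 2 - r)) * c r|
      ≤ 3 * ((N : ℝ) + 1) ^ 2 * ∑ r ∈ Finset.range N, |∑ s ∈ Finset.Icc 1 r, c s| := by
  rw [abel_sum c (fun r : ℕ => ((N : ℝ) - r) * (N + 1 - r) * (N + 2 - r)) N]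
  simp only [sub_self, zero_mul, zero_add]
  refine (Finset.abs_sum_le_sum_abs _ _).trans ?_
  rw [Finset.mul_sum]
  refine Finset.sum_le_sum fun r hr => ?_
  have hrN : (r : ℝ) ≤ N := by exact_mod_cast (Finset.mem_range.1 hr).le
  have hr0 : (0 : ℝ) ≤ r := r.cast_nonneg
  rw [abs_mul]
  gcongr
  have e : ((N : ℝ) - r) * (N + 1 - r) * (N + 2 - r)
      - (N - ((r + 1 : ℕ) : ℝ)) * (N + 1 - ((r + 1 : ℕ) : ℝ)) * (N + 2 - ((r + 1 : ℕ) : ℝ))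
      = 3 * ((N - r) * (N + 1 - r)) := by push_cast; ring
  rw [e, abs_of_nonneg (by
    have : (0 : ℝ) ≤ N - r := by linarith
    have : (0 : ℝ) ≤ N + 1 - r := by linarith
    positivity)]
  nlinarith

/-- **Strong chaos.** If the Cesàro-averaged correlations `C̄_r = (1/r) Σ_{s=1}^r C_s` of an
even correlation sequence decay as `|C̄_r| ≤ K/r^α` with `α > 1`, then the mean drift
variance grows linearly with slope `C_0/6`:
`(1/N) Σ_{r=−N}^{N} (N−|r|)(N+1−|r|)(N+2−|r|)/(6(N+1)²) C_r → C_0/6`. -/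
theorem strong_chaos_linear_growth
    (C : ℤ → ℝ) (heven : ∀ r : ℤ, C (-r) = C r) (K α : ℝ) (hK : 0 < K) (hα : 1 < α)
    (hbound : ∀ r : ℕ, 1 ≤ r →
      |(1 / (r : ℝ)) * ∑ s ∈ Finset.Icc 1 r, C (s : ℤ)| ≤ K / (r : ℝ) ^ α) :
    Tendsto (fun N : ℕ => (1 / (N : ℝ)) * ∑ r ∈ Finset.Icc (-(N : ℤ)) (N : ℤ),
        (((N : ℝ) - |(r : ℝ)|) * ((N : ℝ) + 1 - |(r : ℝ)|) * ((N : ℝ) + 2 - |(r : ℝ)|)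
          / (6 * ((N : ℝ) + 1) ^ 2)) * C r)
      atTop (nhds (C 0 / 6)) := by
  set S : ℕ → ℝ := fun r => ∑ s ∈ Finset.Icc 1 r, C (s : ℤ) with hS
  have hces := (tendsto_partial_sum_zero S K α hα hbound).cesaro
  set T : ℕ → ℝ := fun N => ∑ r ∈ Finset.Icc 1 N,
    (((N : ℝ) - r) * (N + 1 - r) * (N + 2 - r)) * C (r : ℤ) with hT
  have herr : Tendsto (fun N : ℕ => (N : ℝ)⁻¹ * (T N / (3 * ((N : ℝ) + 1) ^ 2)))
      atTop (nhds 0) := by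
    refine squeeze_zero_norm (fun N => ?_) hces
    rw [Real.norm_eq_abs, abs_mul, abs_div, abs_of_nonneg (by positivity : (0 : ℝ) ≤ (N : ℝ)⁻¹),
      abs_of_pos (by positivity : (0 : ℝ) < 3 * ((N : ℝ) + 1) ^ 2)]
    gcongr
    rw [div_le_iff₀' (by positivity)]
    exact weighted_sum_bound (fun r => C (r : ℤ)) N
  -- `N(N+1)(N+2) / (N · 6(N+1)²) = (1 + 1/(N+1)) / 6` for `N ≥ 1`.
  have hmain : Tendsto (fun N : ℕ => (1 + 1 / ((N : ℝ) + 1)) * (C 0 / 6)) atTop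
      (nhds (C 0 / 6)) := by
    simpa using ((tendsto_one_div_add_atTop_nhds_zero_nat (𝕜 := ℝ)).const_add 1).mul_const
      (C 0 / 6)
  have hsum := hmain.add herr
  rw [add_zero] at hsum
  refine hsum.congr' ?_
  filter_upwards [eventually_ge_atTop 1] with N hN
  have hN0 : (0 : ℝ) < N := by exact_mod_cast hN
  rw [sum_Icc_neg_of_even _ (fun r => by simp [heven])]
  have hT2 : ∑ s ∈ Finset.Icc 1 N,
      (((N : ℝ) - |((s : ℤ) : ℝ)|) * ((N : ℝ) + 1 - |((s : ℤ) : ℝ)|)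
        * ((N : ℝ) + 2 - |((s : ℤ) : ℝ)|) / (6 * ((N : ℝ) + 1) ^ 2)) * C (s : ℤ)
      = T N / (6 * ((N : ℝ) + 1) ^ 2) := by
    rw [hT, Finset.sum_div]
    refine Finset.sum_congr rfl fun s _ => ?_
    rw [Int.cast_natCast, abs_of_nonneg s.cast_nonneg]
    ring
  rw [hT2]
  simp only [Int.cast_zero, abs_zero, sub_zero]
  field_simp
  ring
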